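/- Let R be a WLL DCTRS over a signature F. Then the many-step reduction relations of R and of T(R) coincide on T(F,V): for all terms s, t ∈ T(F,V), s →*_R t if and only if s →*_{T(R)} t. -/

import Mathlib

set_option autoImplicit false

/-- First-order terms over a signature `F` and variables `V`. -/
inductive Term (F : Type) (V : Type) : Type where
  | var : V → Term F V
  | app : F → List (Term F V) → Term F V

namespace Term

variable {F V G W : Type}

/-- Application of a substitution. -/
def subst (σ : V → Term F W) : Term F V → Term F W
  | .var x => σ x
  | .app f ts => .app f (ts.attach.map (fun ⟨t, _⟩ => subst σ t))

/-- Renaming of variables. -/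
def rename (g : V → W) (t : Term F V) : Term F W := t.subst (fun x => .var (g x))

/-- Mapping of function symbols. -/
def mapF (g : F → G) : Term F V → Term G V
  | .var x => .var x
  | .app f ts => .app (g f) (ts.attach.map (fun ⟨t, _⟩ => mapF g t))

/-- Number of occurrences of the variable `x` in a term. -/
def count [DecidableEq V] (x : V) : Term F V → ℕ
  | .var y => if y = x then 1 else 0
  | .app _ ts => (ts.attach.map (fun ⟨t, _⟩ => count x t)).sum

/-- The list of variables occurring in a term (with repetitions). -/
def varList : Term F V → List V
  | .var x => [x]
  | .app _ ts => ts.attach.flatMap (fun ⟨t, _⟩ => varList t)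

/-- A term is linear if every variable occurs at most once in it. -/
def Linear [DecidableEq V] (t : Term F V) : Prop := ∀ x : V, t.count x ≤ 1

/-- Well-formedness of a term with respect to an arity assignment. -/
inductive WF (ar : F → ℕ) : Term F V → Prop where
  | var (x : V) : WF ar (.var x)
  | app (f : F) (ts : List (Term F V)) :
      ts.length = ar f → (∀ t ∈ ts, WF ar t) → WF ar (.app f ts)

end Term

/-- Number of occurrences of `x` in a sequence of terms. -/
def seqCount {F V : Type} [DecidableEq V] (x : V) (ts : List (Term F V)) : ℕ :=
  (ts.map (Term.count x)).sum

/-- An oriented conditional rewrite rule `l → r ⇐ s1 ≈ t1, …, sk ≈ tk`. -/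
structure CRule (F V : Type) : Type where
  lhs : Term F V
  rhs : Term F V
  conds : List (Term F V × Term F V)

/-- A conditional term rewriting system: a set of conditional rules. -/
abbrev CTRS (F V : Type) := Set (CRule F V)

namespace CRule

variable {F V W : Type}

/-- The sequence `l, t1, …, tk` of "pattern" terms of a rule. -/
def pats (ρ : CRule F V) : List (Term F V) := ρ.lhs :: ρ.conds.map Prod.snd

/-- The sequence `r, s1, …, sk` of "source" terms of a rule. -/
def srcs (ρ : CRule F V) : List (Term F V) := ρ.rhs :: ρ.conds.map Prod.fst

/-- Weak left-linearity: `|l,t1,…,tk|_x = 1` for every `x ∈ Var(r,s1,…,sk)`. -/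
def WLL [DecidableEq V] (ρ : CRule F V) : Prop :=
  ∀ x : V, 0 < seqCount x ρ.srcs → seqCount x ρ.pats = 1

/-- Determinism: `Var(si) ⊆ Var(l, t1, …, t_{i−1})`. -/
def Det [DecidableEq V] (ρ : CRule F V) : Prop :=
  ∀ i : ℕ, ∀ h : i < ρ.conds.length, ∀ x : V,
    0 < Term.count x (ρ.conds.get ⟨i, h⟩).1 →
    0 < seqCount x (ρ.lhs :: (ρ.conds.take i).map Prod.snd)

/-- Type 3: `Var(r) ⊆ Var(l, s1, t1, …, sk, tk)`. -/
def Type3 [DecidableEq V] (ρ : CRule F V) : Prop :=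
  ∀ x : V, 0 < Term.count x ρ.rhs →
    0 < seqCount x (ρ.lhs :: ρ.conds.flatMap (fun c => [c.1, c.2]))

/-- The left-hand side is a non-variable term. -/
def LhsNonVar (ρ : CRule F V) : Prop := ∀ x : V, ρ.lhs ≠ .var x

/-- Renaming the variables of a rule. -/
def mapV (g : V → W) (ρ : CRule F V) : CRule F W :=
  ⟨ρ.lhs.rename g, ρ.rhs.rename g, ρ.conds.map (fun c => (c.1.rename g, c.2.rename g))⟩

end CRule

/-- `R` is a deterministic CTRS (of Type 3, left-hand sides non-variable). -/
def IsDCTRS {F V : Type} [DecidableEq V] (R : CTRS F V) : Prop :=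
  ∀ ρ ∈ R, ρ.Det ∧ ρ.Type3 ∧ ρ.LhsNonVar

/-- All rules of `R` are weakly left-linear. -/
def IsWLL {F V : Type} [DecidableEq V] (R : CTRS F V) : Prop := ∀ ρ ∈ R, ρ.WLL

/-- Closure of a relation under contexts (rewriting below the root). -/
inductive CtxStep {F V : Type} (root : Term F V → Term F V → Prop) :
    Term F V → Term F V → Prop where
  | root {s t : Term F V} : root s t → CtxStep root s t
  | congr {f : F} {pre post : List (Term F V)} {s t : Term F V} :
      CtxStep root s t →
      CtxStep root (.app f (pre ++ s :: post)) (.app f (pre ++ t :: post))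

/-- A root rewrite step using a rule of `R`, conditions evaluated with `prev`. -/
def RootStep {F V : Type} (R : CTRS F V) (prev : Term F V → Term F V → Prop)
    (s t : Term F V) : Prop :=
  ∃ ρ ∈ R, ∃ σ : V → Term F V,
    s = ρ.lhs.subst σ ∧ t = ρ.rhs.subst σ ∧
    ∀ c ∈ ρ.conds, Relation.ReflTransGen prev (c.1.subst σ) (c.2.subst σ)

/-- The level-stratified reduction relation `→_{(n),R}`. -/
def LevelStep {F V : Type} (R : CTRS F V) : ℕ → Term F V → Term F V → Prop
  | 0 => fun _ _ => False
  | n + 1 => CtxStep (RootStep R (LevelStep R n))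

/-- The reduction relation `→_R = ⋃_{n} →_{(n),R}`. -/
def Red {F V : Type} (R : CTRS F V) (s t : Term F V) : Prop :=
  ∃ n : ℕ, LevelStep R n s t

/-- Many-step reduction `→*_R`. -/
def RedStar {F V : Type} (R : CTRS F V) : Term F V → Term F V → Prop :=
  Relation.ReflTransGen (Red R)

/-- `n`-fold composition of a relation. -/
def NFold {α : Type} (r : α → α → Prop) : ℕ → α → α → Prop
  | 0 => fun a b => a = b
  | n + 1 => fun a c => ∃ b, r a b ∧ NFold r n b c

/-- One-hole contexts. -/
inductive Ctx (F V : Type) : Type where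
  | hole : Ctx F V
  | app : F → List (Term F V) → Ctx F V → List (Term F V) → Ctx F V

/-- Filling the hole of a context with a term. -/
def Ctx.fill {F V : Type} : Ctx F V → Term F V → Term F V
  | .hole, t => t
  | .app f pre C post, t => .app f (pre ++ C.fill t :: post)
/-- Embedding of a rule over `F` into the signature `F ⊕ ℕ` extended with the
fresh tuple constructors `tuple_j` (encoded as `Sum.inr j`). -/
def CRule.liftT {F V : Type} (ρ : CRule F V) : CRule (F ⊕ ℕ) V :=
  ⟨ρ.lhs.mapF Sum.inl, ρ.rhs.mapF Sum.inl,
   ρ.conds.map (fun c => (c.1.mapF Sum.inl, c.2.mapF Sum.inl))⟩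

/-- The variable `x` occurs somewhere in the rule `ρ`. -/
def OccursInRule {F V : Type} [DecidableEq V] (ρ : CRule F V) (x : V) : Prop :=
  0 < seqCount x (ρ.lhs :: ρ.rhs :: ρ.conds.flatMap (fun c => [c.1, c.2]))

/-- `ρ'` is a result of applying the transformation `𝕋` to the rule `ρ`:
unconditional rules are kept (embedded into the extended signature); for a
conditional rule, every occurrence of a variable occurring more than once in
`l, t1, …, tk` is replaced by a distinct fresh variable (yielding `l'` and
`t'_1, …, t'_k`), and the condition
`tuple_j(x1,…,xj) ≈ tuple_j(x1σ,…,xjσ)` is appended, where `x1, …, xj` are the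
introduced fresh variables and `σ` is the renaming mapping them back to the
original variables. -/
def IsTRule {F V : Type} [DecidableEq V] (ρ : CRule F V) (ρ' : CRule (F ⊕ ℕ) V) : Prop :=
  (ρ.conds = [] ∧ ρ' = ρ.liftT) ∨
  (ρ.conds ≠ [] ∧
    ∃ (xs : List V) (σ : V → V) (l' : Term (F ⊕ ℕ) V) (ts' : List (Term (F ⊕ ℕ) V)),
      xs.Nodup ∧
      (∀ x ∈ xs, ¬ OccursInRule ρ x) ∧
      (∀ x : V, x ∉ xs → σ x = x) ∧
      ts'.length = ρ.conds.length ∧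
      l'.rename σ = ρ.lhs.mapF Sum.inl ∧
      (∀ (i : ℕ) (h : i < ρ.conds.length) (h' : i < ts'.length),
        (ts'.get ⟨i, h'⟩).rename σ = ((ρ.conds.get ⟨i, h⟩).2).mapF Sum.inl) ∧
      (∀ x ∈ xs, seqCount x (l' :: ts') = 1) ∧
      (∀ x : V, x ∉ xs →
        seqCount x (l' :: ts') =
          if seqCount x ρ.liftT.pats ≤ 1 then seqCount x ρ.liftT.pats else 0) ∧
      ρ' = ⟨l', ρ.rhs.mapF Sum.inl,
            (List.zip (ρ.conds.map (fun c => c.1.mapF Sum.inl)) ts') ++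
              [(.app (Sum.inr xs.length) (xs.map Term.var),
                .app (Sum.inr xs.length) (xs.map (fun x => Term.var (σ x))))]⟩)

/-- `R'` is a result of applying the transformation `𝕋` to the CTRS `R`,
i.e., `R' = { 𝕋(ρ) : ρ ∈ R }`. -/
def IsT {F V : Type} [DecidableEq V] (R : CTRS F V) (R' : CTRS (F ⊕ ℕ) V) : Prop :=
  (∀ ρ ∈ R, ∃ ρ' ∈ R', IsTRule ρ ρ') ∧ (∀ ρ' ∈ R', ∃ ρ ∈ R, IsTRule ρ ρ')

/-!
For a rule `ρ`, the rule `𝕋(ρ)` is a rule `ρ₀` over `F` together with a tuple condition, where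
`ρ` is recovered from `ρ₀` by the renaming `g` that identifies the split variables.

If `σ` is a substitution that makes `ρ` applicable, then `σ ∘ g` makes `𝕋(ρ)` applicable to the
same redex, and the tuple condition holds trivially because `g` is idempotent.

Conversely, a substitution for `𝕋(ρ)` may contain tuple symbols, and it need not be constant on the
fibres of `g`: it only satisfies `σ x →* σ (g x)`. Tuple symbols are eliminated by projecting every
tuple to one of its arguments, the index depending only on the number of tuples around it. As rules
over `F` cannot look inside a tuple, this projection maps reductions of `𝕋(R)` to reductions of `R`,
and choosing index `i` for the outermost tuple extracts `σ xᵢ →* σ (g xᵢ)` from the tuple condition.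
Hence `l' σ →* l' (σ ∘ g) = l σ`, to which `ρ` applies.
-/

open Relation Filter

section

variable {F V G W : Type}

namespace Term

@[induction_eliminator]
theorem induction {P : Term F V → Prop} (var : ∀ x, P (.var x))
    (app : ∀ f ts, (∀ t ∈ ts, P t) → P (.app f ts)) : ∀ t, P t
  | .var x => var x
  | .app f ts => app f ts fun t _ => induction var app t

@[simp]
theorem subst_var (σ : V → Term F W) (x : V) : (var x).subst σ = σ x := by
  simp [subst]

@[simp]
theorem subst_app (σ : V → Term F W) (f : F) (ts : List (Term F V)) :
    (app f ts).subst σ = app f (ts.map (subst σ)) := by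
  simp [subst]

@[simp]
theorem rename_var (g : V → W) (x : V) : (var x : Term F V).rename g = var (g x) := by
  simp [rename]

@[simp]
theorem rename_app (g : V → W) (f : F) (ts : List (Term F V)) :
    (app f ts).rename g = app f (ts.map (rename g)) := by
  simp only [rename, subst_app]
  rfl

@[simp]
theorem mapF_var (f : F → G) (x : V) : (var x : Term F V).mapF f = var x := by
  simp [mapF]

@[simp]
theorem mapF_app (g : F → G) (f : F) (ts : List (Term F V)) :
    (app f ts).mapF g = app (g f) (ts.map (mapF g)) := by
  simp [mapF]

@[simp]
theorem count_app [DecidableEq V] (x : V) (f : F) (ts : List (Term F V)) :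
    (app f ts).count x = seqCount x ts := by
  simp [count, seqCount]

theorem count_var_pos [DecidableEq V] {x y : V} :
    0 < (var y : Term F V).count x ↔ y = x := by
  simp [count, Nat.pos_iff_ne_zero]

theorem subst_rename {U : Type} (g : V → W) (σ : W → Term F U) (t : Term F V) :
    (t.rename g).subst σ = t.subst (σ ∘ g) := by
  induction t with
  | var x => simp
  | app f ts ih => simpa using ih

theorem rename_id (t : Term F V) : t.rename id = t := by
  induction t with
  | var x => simp
  | app f ts ih => rw [rename_app, List.map_congr_left ih, List.map_id']

theorem mapF_subst (f : F → G) (σ : V → Term F W) (t : Term F V) :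
    (t.subst σ).mapF f = (t.mapF f).subst (mapF f ∘ σ) := by
  induction t with
  | var x => simp
  | app f ts ih => simpa using ih

theorem mapF_rename (f : F → G) (g : V → W) (t : Term F V) :
    (t.rename g).mapF f = (t.mapF f).rename g := by
  simp [rename, mapF_subst, Function.comp_def]

theorem mem_range_mapF_of_rename {f : F → G} {g : V → W} {u : Term G V}
    (h : u.rename g ∈ Set.range (mapF f)) : u ∈ Set.range (mapF f) := by
  induction u with
  | var x => exact ⟨var x, mapF_var f x⟩
  | app f' us ih =>
    obtain ⟨_ | ⟨f₀, ws⟩, h⟩ := h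
    · simp at h
    · simp only [mapF_app, rename_app, app.injEq] at h
      obtain ⟨rfl, h⟩ := h
      have args_mem : us.map (rename g) ∈ Set.range (List.map (mapF f)) := ⟨ws, h⟩
      rw [Set.range_list_map, Set.mem_ofPred_eq, List.forall_mem_map] at args_mem
      have us_mem : us ∈ Set.range (List.map (mapF f)) := by
        rw [Set.range_list_map]
        exact fun u hu => ih u hu (args_mem u hu)
      obtain ⟨vs, rfl⟩ := us_mem
      exact ⟨app f₀ vs, mapF_app f f₀ vs⟩

theorem mem_range_map_mapF_of_rename {f : F → G} {g : V → W} {us : List (Term G V)}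
    (h : us.map (rename g) ∈ Set.range (List.map (mapF f))) :
    us ∈ Set.range (List.map (mapF f)) := by
  rw [Set.range_list_map, Set.mem_ofPred_eq] at h ⊢
  exact fun u hu => mem_range_mapF_of_rename (h _ (List.mem_map_of_mem hu))

end Term

section Count

variable [DecidableEq V]

theorem seqCount_pos {x : V} {ts : List (Term F V)} :
    0 < seqCount x ts ↔ ∃ t ∈ ts, 0 < t.count x := by
  simp [seqCount, List.sum_pos_iff_exists_pos_nat]

theorem Term.count_mapF (f : F → G) (x : V) (t : Term F V) : (t.mapF f).count x = t.count x := by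
  induction t with
  | var y => simp [count]
  | app f ts ih =>
    simp only [mapF_app, count_app, seqCount, List.map_map]
    exact congrArg List.sum (List.map_congr_left ih)

theorem seqCount_map_mapF (f : F → G) (x : V) (ts : List (Term F V)) :
    seqCount x (ts.map (Term.mapF f)) = seqCount x ts := by
  simp [seqCount, Function.comp_def, Term.count_mapF]

theorem Term.count_rename_pos [DecidableEq W] (g : V → W) {x : V} {t : Term F V}
    (h : 0 < t.count x) : 0 < (t.rename g).count (g x) := by
  induction t with
  | var y => simpa [count_var_pos] using congrArg g (count_var_pos.1 h)
  | app f ts ih =>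
    rw [count_app, seqCount_pos] at h
    obtain ⟨t, ht, hx⟩ := h
    rw [rename_app, count_app, seqCount_pos]
    exact ⟨_, List.mem_map_of_mem ht, ih t ht hx⟩

theorem seqCount_map_rename_pos [DecidableEq W] (g : V → W) {x : V} {ts : List (Term F V)}
    (h : 0 < seqCount x ts) : 0 < seqCount (g x) (ts.map (Term.rename g)) := by
  obtain ⟨t, ht, hx⟩ := seqCount_pos.1 h
  exact seqCount_pos.2 ⟨_, List.mem_map_of_mem ht, Term.count_rename_pos g hx⟩

theorem Term.rename_eq_self {g : V → V} {t : Term F V} (h : ∀ x, 0 < t.count x → g x = x) :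
    t.rename g = t := by
  induction t with
  | var y => simpa using h y (count_var_pos.2 rfl)
  | app f ts ih =>
    rw [rename_app, List.map_congr_left fun t ht => ih t ht fun x hx => h x ?_, List.map_id']
    rw [count_app, seqCount_pos]
    exact ⟨t, ht, hx⟩

theorem occursInRule_iff {ρ : CRule F V} {x : V} :
    OccursInRule ρ x ↔ ∃ t, (t ∈ ρ.pats ∨ t ∈ ρ.srcs) ∧ 0 < t.count x := by
  rw [OccursInRule, seqCount_pos]
  refine exists_congr fun t => and_congr_left' ?_
  simp only [CRule.pats, CRule.srcs, List.mem_cons, List.mem_flatMap, List.mem_map,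
    List.not_mem_nil, or_false]
  grind

end Count

section Reduction

variable {R : CTRS F V}

theorem RedStar.refl (t : Term F V) : RedStar R t t :=
  ReflTransGen.refl

theorem RedStar.trans {s t u : Term F V} (hst : RedStar R s t) (htu : RedStar R t u) :
    RedStar R s u :=
  ReflTransGen.trans hst htu

theorem CtxStep.mono : Monotone (CtxStep (F := F) (V := V)) := by
  intro p q hpq s t h
  induction h with
  | root h => exact .root (hpq _ _ h)
  | congr _ ih => exact .congr ih

theorem RootStep.mono : Monotone (RootStep R) := by
  rintro p q hpq s t ⟨ρ, hρ, σ, hs, ht, hc⟩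
  exact ⟨ρ, hρ, σ, hs, ht, fun c hcρ => ReflTransGen.mono hpq _ _ (hc c hcρ)⟩

theorem LevelStep.mono : Monotone (LevelStep R) := by
  refine monotone_nat_of_le_succ fun n => ?_
  induction n with
  | zero => exact fun _ _ h => h.elim
  | succ n ih => exact CtxStep.mono (RootStep.mono ih)

theorem RedStar.eventually_levelStep {s t : Term F V} (h : RedStar R s t) :
    ∀ᶠ n in atTop, ReflTransGen (LevelStep R n) s t := by
  induction h with
  | refl => exact .of_forall fun _ => .refl
  | tail _ step ih =>
    obtain ⟨m, hm⟩ := step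
    filter_upwards [ih, eventually_ge_atTop m] with n hn hmn
    exact hn.tail (LevelStep.mono hmn _ _ hm)

theorem RedStar.of_rule {ρ : CRule F V} (hρ : ρ ∈ R) {σ : V → Term F V}
    (hc : ∀ c ∈ ρ.conds, RedStar R (c.1.subst σ) (c.2.subst σ)) :
    RedStar R (ρ.lhs.subst σ) (ρ.rhs.subst σ) := by
  have common_level := (eventually_all_finite ρ.conds.finite_toSet).2
    fun c hcρ => (hc c hcρ).eventually_levelStep
  obtain ⟨n, hn⟩ := common_level.exists
  exact .single ⟨n + 1, .root ⟨ρ, hρ, σ, rfl, rfl, hn⟩⟩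

theorem RedStar.congr {f : F} {pre post : List (Term F V)} {s t : Term F V}
    (h : RedStar R s t) : RedStar R (.app f (pre ++ s :: post)) (.app f (pre ++ t :: post)) := by
  refine ReflTransGen.lift (fun u => Term.app f (pre ++ u :: post)) ?_ _ _ h
  rintro u v ⟨_ | n, hn⟩
  · exact hn.elim
  · exact ⟨n + 1, .congr hn⟩

theorem RedStar.app {f : F} {ss ts : List (Term F V)} (h : List.Forall₂ (RedStar R) ss ts) :
    RedStar R (.app f ss) (.app f ts) := by
  suffices ∀ pre, RedStar R (.app f (pre ++ ss)) (.app f (pre ++ ts)) from this []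
  induction h with
  | nil => exact fun _ => .refl _
  | @cons s t _ _ hst _ ih =>
    exact fun pre => hst.congr.trans (by simpa using ih (pre ++ [t]))

theorem RedStar.subst {σ τ : V → Term F V} (h : ∀ x, RedStar R (σ x) (τ x)) (t : Term F V) :
    RedStar R (t.subst σ) (t.subst τ) := by
  induction t with
  | var x => simpa using h x
  | app f ts ih =>
    rw [Term.subst_app, Term.subst_app]
    refine .app ?_
    rw [List.forall₂_map_left_iff, List.forall₂_map_right_iff, List.forall₂_same]
    exact ih

theorem RedStar.least {Q : Term F V → Term F V → Prop} (refl : ∀ t, Q t t)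
    (trans : ∀ {s t u}, Q s t → Q t u → Q s u)
    (congr : ∀ {f pre post s t}, Q s t → Q (.app f (pre ++ s :: post)) (.app f (pre ++ t :: post)))
    (rule : ∀ ρ ∈ R, ∀ σ, (∀ c ∈ ρ.conds, Q (c.1.subst σ) (c.2.subst σ)) →
      Q (ρ.lhs.subst σ) (ρ.rhs.subst σ))
    {s t : Term F V} (h : RedStar R s t) : Q s t := by
  have star_le {p : Term F V → Term F V → Prop} (hp : p ≤ Q) : ReflTransGen p ≤ Q := by
    intro s t h
    induction h with
    | refl => exact refl s
    | tail _ step ih => exact trans ih (hp _ _ step)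
  have level_le (n : ℕ) : LevelStep R n ≤ Q := by
    induction n with
    | zero => exact fun _ _ h => h.elim
    | succ n ihn =>
      intro s t h
      rw [LevelStep] at h
      induction h with
      | root h =>
        obtain ⟨ρ, hρ, σ, rfl, rfl, hc⟩ := h
        exact rule ρ hρ σ fun c hcρ => star_le ihn _ _ (hc c hcρ)
      | congr _ ih => exact congr ih
  exact star_le (fun s t ⟨n, hn⟩ => level_le n s t hn) _ _ h

end Reduction

section Project

variable (d : Term F V)

/-- Elimination of the tuple symbols `Sum.inr j`: a tuple that lies below `k` other tuples is
replaced by its argument number `p[k]`, and by the default `d` where this makes no sense. -/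
def Term.project : List ℕ → Term (F ⊕ ℕ) V → Term F V
  | _, .var x => .var x
  | p, .app (.inl f) ts => .app f (ts.attach.map fun ⟨t, _⟩ => project p t)
  | [], .app (.inr _) _ => d
  | i :: p, .app (.inr _) ts => (ts.attach.map fun ⟨t, _⟩ => project p t).getD i d
termination_by _ t => t

namespace Term

@[simp]
theorem project_var (p : List ℕ) (x : V) : project d p (var x) = var x := by
  simp [project]

@[simp]
theorem project_app_inl (p : List ℕ) (f : F) (ts : List (Term (F ⊕ ℕ) V)) :
    project d p (app (.inl f) ts) = app f (ts.map (project d p)) := by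
  simp [project]

theorem project_nil_app_inr (k : ℕ) (ts : List (Term (F ⊕ ℕ) V)) :
    project d [] (app (.inr k) ts) = d := by
  rw [project]

theorem project_cons_app_inr (i k : ℕ) (p : List ℕ) (ts : List (Term (F ⊕ ℕ) V)) :
    project d (i :: p) (app (.inr k) ts) = (ts.map (project d p)).getD i d := by
  simp [project]

theorem project_subst_mapF (p : List ℕ) (σ : W → Term (F ⊕ ℕ) V) (t : Term F W) :
    project d p ((t.mapF Sum.inl).subst σ) = t.subst (project d p ∘ σ) := by
  induction t with
  | var x => simp
  | app f ts ih => simpa using ih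

theorem leftInverse_project_mapF (p : List ℕ) :
    Function.LeftInverse (project d p) (mapF Sum.inl) := by
  intro t
  induction t with
  | var x => simp
  | app f ts ih =>
    rw [mapF_app, project_app_inl, List.map_map]
    exact congrArg (app f) ((List.map_congr_left ih).trans (List.map_id' ts))

end Term

theorem RedStar.project_congr {R : CTRS F V} {f : F ⊕ ℕ} {pre post : List (Term (F ⊕ ℕ) V)}
    {s t : Term (F ⊕ ℕ) V} (h : ∀ p, RedStar R (Term.project d p s) (Term.project d p t))
    (p : List ℕ) :
    RedStar R (Term.project d p (.app f (pre ++ s :: post)))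
      (Term.project d p (.app f (pre ++ t :: post))) := by
  rcases f with f | k
  · simpa using (h p).congr
  rcases p with _ | ⟨i, p⟩
  · simpa only [Term.project_nil_app_inr] using RedStar.refl _
  simp only [Term.project_cons_app_inr, List.map_append, List.map_cons]
  rcases lt_or_ge i (pre.map (Term.project d p)).length with hi | hi
  · simpa only [List.getD_append _ _ _ _ hi] using RedStar.refl _
  · simp only [List.getD_append_right _ _ _ _ hi]
    rcases i - (pre.map (Term.project d p)).length with _ | j
    · exact h p
    · exact .refl _

end Project

theorem Term.mapF_inl_injective :
    Function.Injective (mapF Sum.inl : Term F V → Term (F ⊕ ℕ) V) := fun s t h => by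
  simpa only [leftInverse_project_mapF s [] _] using congrArg (project s []) h

/-- The condition `tuple_j(x₁, …, xⱼ) ≈ tuple_j(g x₁, …, g xⱼ)` appended by `𝕋`. -/
def tupleCond (g : V → V) (xs : List V) : Term (F ⊕ ℕ) V × Term (F ⊕ ℕ) V :=
  (.app (.inr xs.length) (xs.map .var), .app (.inr xs.length) (xs.map fun x => .var (g x)))

/-- The rule `ρ' = 𝕋(ρ)` is a rule `ρ₀` over `F` extended by the tuple condition, where `ρ₀` arises
from `ρ` by splitting variables: the renaming `g` sends the fresh variables `xs` to the variables of
`ρ` that they replace. The tuple condition may be missing if there are no fresh variables, which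
covers the unconditional rules. -/
structure IsSplitting (ρ : CRule F V) (ρ' : CRule (F ⊕ ℕ) V) (ρ₀ : CRule F V) (g : V → V)
    (xs : List V) : Prop where
  mapV_eq : ρ₀.mapV g = ρ
  rename_srcs : ∀ s ∈ ρ₀.srcs, s.rename g = s
  idem : ∀ x, g (g x) = g x
  map_of_notMem : ∀ x ∉ xs, g x = x
  lhs_eq : ρ'.lhs = ρ₀.lhs.mapF Sum.inl
  rhs_eq : ρ'.rhs = ρ₀.rhs.mapF Sum.inl
  mem_conds : ∀ c ∈ ρ'.conds, c ∈ ρ₀.liftT.conds ∨ c = tupleCond g xs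
  liftT_conds_subset : ρ₀.liftT.conds ⊆ ρ'.conds
  tupleCond_mem : ∀ x ∈ xs, tupleCond g xs ∈ ρ'.conds

theorem isSplitting_liftT (ρ : CRule F V) : IsSplitting ρ ρ.liftT ρ id [] where
  mapV_eq := by simp [CRule.mapV, Term.rename_id]
  rename_srcs s _ := s.rename_id
  idem _ := rfl
  map_of_notMem _ _ := rfl
  lhs_eq := rfl
  rhs_eq := rfl
  mem_conds _ := Or.inl
  liftT_conds_subset := List.Subset.refl _
  tupleCond_mem := by simp

theorem isSplitting_append_tupleCond {ρ ρ₀ : CRule F V} {g : V → V} {xs : List V}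
    (mapV_eq : ρ₀.mapV g = ρ) (rename_srcs : ∀ s ∈ ρ₀.srcs, s.rename g = s)
    (idem : ∀ x, g (g x) = g x) (map_of_notMem : ∀ x ∉ xs, g x = x) :
    IsSplitting ρ ⟨ρ₀.liftT.lhs, ρ₀.liftT.rhs, ρ₀.liftT.conds ++ [tupleCond g xs]⟩ ρ₀ g xs where
  mapV_eq := mapV_eq
  rename_srcs := rename_srcs
  idem := idem
  map_of_notMem := map_of_notMem
  lhs_eq := rfl
  rhs_eq := rfl
  mem_conds := by simp
  liftT_conds_subset := List.subset_append_left _ _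
  tupleCond_mem := by simp

theorem mapV_zip_conds {ρ : CRule F V} {g : V → V} {l : Term F V} {ts : List (Term F V)}
    (hl : l.rename g = ρ.lhs) (hts : ts.map (Term.rename g) = ρ.conds.map Prod.snd)
    (hs : ∀ s ∈ ρ.srcs, s.rename g = s) :
    CRule.mapV g ⟨l, ρ.rhs, (ρ.conds.map Prod.fst).zip ts⟩ = ρ := by
  have sources_fixed : (ρ.conds.map Prod.fst).map (Term.rename g) = ρ.conds.map Prod.fst :=
    (List.map_congr_left fun s h => hs s (List.mem_cons_of_mem _ h)).trans (List.map_id' _)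
  have conds_eq :
      ((ρ.conds.map Prod.fst).zip ts).map (Prod.map (Term.rename g) (Term.rename g)) = ρ.conds := by
    rw [← List.zip_map, sources_fixed, hts, List.zip_map']
    exact List.map_id' _
  simp only [CRule.mapV, hl, hs ρ.rhs List.mem_cons_self]
  exact congrArg (CRule.mk ρ.lhs ρ.rhs) conds_eq

theorem map_map_of_fresh [DecidableEq V] {ρ : CRule F V} {ps : List (Term (F ⊕ ℕ) V)}
    {g : V → V} {xs : List V} (fresh : ∀ x ∈ xs, ¬ OccursInRule ρ x) (hg : ∀ x ∉ xs, g x = x)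
    (occurs : ∀ x ∈ xs, 0 < seqCount x ps)
    (hps : ps.map (Term.rename g) = ρ.pats.map (Term.mapF Sum.inl)) (x : V) :
    g (g x) = g x := by
  by_cases hx : x ∈ xs
  · have map_occurs := seqCount_map_rename_pos g (occurs x hx)
    rw [hps, seqCount_map_mapF, seqCount_pos] at map_occurs
    obtain ⟨t, ht, hgx⟩ := map_occurs
    exact hg _ fun hmem => fresh _ hmem (occursInRule_iff.2 ⟨t, .inl ht, hgx⟩)
  · rw [hg x hx, hg x hx]

theorem IsTRule.exists_isSplitting [DecidableEq V] {ρ : CRule F V} {ρ' : CRule (F ⊕ ℕ) V}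
    (h : IsTRule ρ ρ') : ∃ ρ₀ g xs, IsSplitting ρ ρ' ρ₀ g xs := by
  obtain ⟨-, rfl⟩ | ⟨-, xs, g, l', ts', -, fresh, hg, hlen, hl', ht', hcount, -, rfl⟩ := h
  · exact ⟨ρ, id, [], isSplitting_liftT ρ⟩
  have hts' : ts'.map (Term.rename g) = (ρ.conds.map Prod.snd).map (Term.mapF Sum.inl) :=
    List.ext_getElem (by simpa using hlen) fun i h h' => by
      simpa using ht' i (by simpa using h') (by simpa using h)
  have idem := map_map_of_fresh (ps := l' :: ts') fresh hg
    (fun x hx => (hcount x hx).symm ▸ one_pos) (by simp [CRule.pats, hl', hts'])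
  have sources_fixed : ∀ s ∈ ρ.srcs, s.rename g = s := fun s hs =>
    Term.rename_eq_self fun x hx => hg x fun hmem =>
      fresh x hmem (occursInRule_iff.2 ⟨s, .inr hs, hx⟩)
  obtain ⟨l₀, rfl⟩ := Term.mem_range_mapF_of_rename ⟨_, hl'.symm⟩
  obtain ⟨ts₀, rfl⟩ := Term.mem_range_map_mapF_of_rename ⟨_, hts'.symm⟩
  have hl₀ : l₀.rename g = ρ.lhs := Term.mapF_inl_injective (by rw [Term.mapF_rename, hl'])
  have hts₀ : ts₀.map (Term.rename g) = ρ.conds.map Prod.snd :=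
    Term.mapF_inl_injective.list_map (by
      rw [← hts']
      simp [Function.comp_def, Term.mapF_rename])
  have hlen₀ : ts₀.length = ρ.conds.length := by simpa using hlen
  let ρ₀ : CRule F V := ⟨l₀, ρ.rhs, (ρ.conds.map Prod.fst).zip ts₀⟩
  have srcs_eq : ρ₀.srcs = ρ.srcs := by
    simp [ρ₀, CRule.srcs, List.map_fst_zip, hlen₀]
  have liftT_conds : ρ₀.liftT.conds =
      (ρ.conds.map fun c => c.1.mapF Sum.inl).zip (ts₀.map (Term.mapF Sum.inl)) := by
    change List.map (Prod.map _ _) _ = _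
    rw [← List.zip_map, List.map_map]
    rfl
  have hρ₀ := isSplitting_append_tupleCond (mapV_zip_conds hl₀ hts₀ sources_fixed)
    (srcs_eq ▸ sources_fixed) idem hg
  exact ⟨ρ₀, g, xs, liftT_conds ▸ hρ₀⟩

theorem IsSplitting.redStar_mapF {ρ ρ₀ : CRule F V} {ρ' : CRule (F ⊕ ℕ) V} {g : V → V}
    {xs : List V} (h : IsSplitting ρ ρ' ρ₀ g xs) {R' : CTRS (F ⊕ ℕ) V} (hρ' : ρ' ∈ R')
    {σ : V → Term F V}
    (hc : ∀ c ∈ ρ.conds,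
      RedStar R' ((c.1.subst σ).mapF Sum.inl) ((c.2.subst σ).mapF Sum.inl)) :
    RedStar R' ((ρ.lhs.subst σ).mapF Sum.inl) ((ρ.rhs.subst σ).mapF Sum.inl) := by
  obtain rfl := h.mapV_eq
  have instance_eq (t : Term F V) : ((t.rename g).subst σ).mapF Sum.inl =
      (t.mapF (Sum.inl : F → F ⊕ ℕ)).subst (Term.mapF Sum.inl ∘ σ ∘ g) := by
    rw [Term.subst_rename, Term.mapF_subst]
  simp only [CRule.mapV, instance_eq, ← h.lhs_eq, ← h.rhs_eq]
  refine .of_rule hρ' fun c hcρ' => ?_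
  obtain hc₀ | rfl := h.mem_conds c hcρ'
  · obtain ⟨c, hcρ₀, rfl⟩ := List.mem_map.1 hc₀
    simpa only [instance_eq] using hc _ (List.mem_map.2 ⟨c, hcρ₀, rfl⟩)
  · simpa [tupleCond, Function.comp_def, h.idem] using RedStar.refl _

theorem RedStar.of_mapV_mem {R : CTRS F V} {ρ : CRule F V} {g : V → V} (hρ : ρ.mapV g ∈ R)
    (hg : ∀ s ∈ ρ.srcs, s.rename g = s) {σ : V → Term F V}
    (hσ : ∀ x, RedStar R (σ x) (σ (g x)))
    (hc : ∀ c ∈ ρ.conds, RedStar R (c.1.subst σ) (c.2.subst σ)) :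
    RedStar R (ρ.lhs.subst σ) (ρ.rhs.subst σ) := by
  have subst_rename (t : Term F V) : RedStar R (t.subst σ) ((t.rename g).subst σ) := by
    rw [Term.subst_rename]
    exact .subst hσ t
  have rule_step : RedStar R ((ρ.mapV g).lhs.subst σ) ((ρ.mapV g).rhs.subst σ) := by
    refine .of_rule hρ fun c' hc' => ?_
    obtain ⟨c, hcρ, rfl⟩ := List.mem_map.1 hc'
    rw [hg c.1 (List.mem_cons_of_mem _ (List.mem_map.2 ⟨c, hcρ, rfl⟩))]
    exact (hc c hcρ).trans (subst_rename c.2)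
  have rhs_eq : (ρ.mapV g).rhs = ρ.rhs := hg _ List.mem_cons_self
  exact (subst_rename ρ.lhs).trans (rhs_eq ▸ rule_step)

theorem IsSplitting.redStar_project {ρ ρ₀ : CRule F V} {ρ' : CRule (F ⊕ ℕ) V} {g : V → V}
    {xs : List V} (h : IsSplitting ρ ρ' ρ₀ g xs) {R : CTRS F V} (hρ : ρ ∈ R) (d : Term F V)
    {σ : V → Term (F ⊕ ℕ) V}
    (hc : ∀ c ∈ ρ'.conds, ∀ p,
      RedStar R (Term.project d p (c.1.subst σ)) (Term.project d p (c.2.subst σ)))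
    (p : List ℕ) :
    RedStar R (Term.project d p (ρ'.lhs.subst σ)) (Term.project d p (ρ'.rhs.subst σ)) := by
  rw [h.lhs_eq, h.rhs_eq, Term.project_subst_mapF, Term.project_subst_mapF]
  refine .of_mapV_mem (h.mapV_eq ▸ hρ) h.rename_srcs (fun x => ?_) fun c hc₀ => ?_
  · by_cases hx : x ∈ xs
    · have tuple_red := hc _ (h.tupleCond_mem x hx)
      obtain ⟨i, hi, rfl⟩ := List.mem_iff_getElem.1 hx
      simpa [tupleCond, Term.project_cons_app_inr, hi] using tuple_red (i :: p)
    · rw [h.map_of_notMem x hx]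
      exact .refl _
  · simpa only [Term.project_subst_mapF] using
      hc _ (h.liftT_conds_subset (List.mem_map_of_mem hc₀)) p

section Simulation

variable [DecidableEq V] {R : CTRS F V} {R' : CTRS (F ⊕ ℕ) V}

theorem RedStar.mapF_inl (hT : ∀ ρ ∈ R, ∃ ρ' ∈ R', IsTRule ρ ρ') {s t : Term F V}
    (h : RedStar R s t) : RedStar R' (s.mapF Sum.inl) (t.mapF Sum.inl) := by
  refine h.least (Q := fun s t => RedStar R' (s.mapF Sum.inl) (t.mapF Sum.inl))
    (fun _ => .refl _) .trans (fun hst => by simpa using hst.congr) fun ρ hρ σ hc => ?_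
  obtain ⟨ρ', hρ', hρρ'⟩ := hT ρ hρ
  obtain ⟨ρ₀, g, xs, hsplit⟩ := hρρ'.exists_isSplitting
  exact hsplit.redStar_mapF hρ' hc

theorem RedStar.project (hT : ∀ ρ' ∈ R', ∃ ρ ∈ R, IsTRule ρ ρ') (d : Term F V)
    {s t : Term (F ⊕ ℕ) V} (h : RedStar R' s t) (p : List ℕ) :
    RedStar R (Term.project d p s) (Term.project d p t) := by
  refine h.least (Q := fun s t => ∀ p, RedStar R (Term.project d p s) (Term.project d p t))
    (fun _ _ => .refl _) (fun hst htu p => (hst p).trans (htu p)) (RedStar.project_congr d)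
    (fun ρ' hρ' σ hc => ?_) p
  obtain ⟨ρ, hρ, hρρ'⟩ := hT ρ' hρ'
  obtain ⟨ρ₀, g, xs, hsplit⟩ := hρρ'.exists_isSplitting
  exact hsplit.redStar_project hρ d hc

end Simulation

theorem T_preserves_reduction_general [DecidableEq V] (R : CTRS F V) (R' : CTRS (F ⊕ ℕ) V)
    (hT : IsT R R') (s t : Term F V) :
    RedStar R s t ↔ RedStar R' (s.mapF Sum.inl) (t.mapF Sum.inl) := by
  refine ⟨RedStar.mapF_inl hT.1, fun h => ?_⟩
  simpa only [Term.leftInverse_project_mapF s [] _] using h.project hT.2 s []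

end

/-- **Theorem (reduction equivalence of `R` and `𝕋(R)`).**
Let `R` be a WLL DCTRS over `F`. Then the many-step reduction relations of `R`
and of `𝕋(R)` coincide on `T(F,V)`: for all `s, t ∈ T(F,V)`,
`s →*_R t` iff `s →*_{𝕋(R)} t`. -/
theorem T_preserves_reduction {F V : Type} [DecidableEq V]
    (R : CTRS F V) (R' : CTRS (F ⊕ ℕ) V)
    (hD : IsDCTRS R) (hW : IsWLL R) (hT : IsT R R')
    (s t : Term F V) :
    RedStar R s t ↔ RedStar R' (s.mapF Sum.inl) (t.mapF Sum.inl) :=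
  T_preserves_reduction_general R R' hT s t
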